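/- arXiv:1612.08257 — 2 statements merged into one kernel-verified Lean document; each statement's English description precedes it below -/
import Mathlib

section
/- Let A be a noetherian local ring, n a natural number, and M and N finitely generated non-zero A-modules. Assume: (a) M is N-perfect with p := pd(M) ≤ n; (b) N satisfies the condition (C_n); (c) Tor^A_i(M, N) = 0 for all i > 0. Then M ⊗_A N satisfies the condition (C_{n−p}). -/
noncomputable section

open TensorProduct

universe u v w





/-- The depth of the ideal `I` on the module `M`: the supremum of lengths of
`M`-regular sequences with entries in `I`. -/
noncomputable def idealDepth (A : Type u) [CommRing A] (I : Ideal A)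
    (M : Type v) [AddCommGroup M] [Module A M] : ℕ∞ :=
  sSup {n : ℕ∞ | ∃ rs : List A, (rs.length : ℕ∞) = n ∧ (∀ r ∈ rs, r ∈ I) ∧
    RingTheory.Sequence.IsRegular M rs}

/-- The depth of a module over a local ring. -/
noncomputable def localDepth (A : Type u) [CommRing A] [IsLocalRing A]
    (M : Type v) [AddCommGroup M] [Module A M] : ℕ∞ :=
  idealDepth A (IsLocalRing.maximalIdeal A) M

/-- The (Krull) dimension of a module, i.e. the Krull dimension of its support. -/
noncomputable def supportDim (A : Type u) [CommRing A]
    (M : Type v) [AddCommGroup M] [Module A M] : WithBot ℕ∞ :=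
  Order.krullDim (Module.support A M)

/-- `depth (M_P)` : the depth of the localization of `M` at a prime `P`,
over the local ring `A_P`. -/
noncomputable def depthAt (A : Type u) [CommRing A]
    (M : Type v) [AddCommGroup M] [Module A M] (P : PrimeSpectrum A) : ℕ∞ :=
  localDepth (Localization.AtPrime P.asIdeal) (LocalizedModule P.asIdeal.primeCompl M)

/-- `ht_M(P) = dim (M_P)` : the height of a prime `P` in the support of `M`,
i.e. the dimension of the localized module `M_P` over `A_P`. -/
noncomputable def heightAt (A : Type u) [CommRing A]
    (M : Type v) [AddCommGroup M] [Module A M] (P : PrimeSpectrum A) : WithBot ℕ∞ :=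
  supportDim (Localization.AtPrime P.asIdeal) (LocalizedModule P.asIdeal.primeCompl M)

/-- Serre's condition `(S_n)` for a module: for every `P` in the support,
`depth (M_P) ≥ min (n, ht_M(P))`. -/
def SerreCondS (A : Type u) [CommRing A] (n : ℕ)
    (M : Type v) [AddCommGroup M] [Module A M] : Prop :=
  ∀ P ∈ Module.support A M,
    min (n : WithBot ℕ∞) (heightAt A M P) ≤ (depthAt A M P : WithBot ℕ∞)

/-- The condition `(C_n)` for a module: for every `P` in the support,
`depth (M_P) ≥ min (n, ht_M(P)) - 1`, equivalently
`min (n, ht_M(P)) ≤ depth (M_P) + 1`. -/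
def CondC (A : Type u) [CommRing A] (n : ℕ)
    (M : Type v) [AddCommGroup M] [Module A M] : Prop :=
  ∀ P ∈ Module.support A M,
    min (n : WithBot ℕ∞) (heightAt A M P) ≤ (depthAt A M P : WithBot ℕ∞) + 1

/-- A module `M` is almost Cohen-Macaulay if `depth(P, M) = depth (M_P)` for every
`P` in the support of `M` (Kang's definition). -/
def IsAlmostCMModule (A : Type u) [CommRing A]
    (M : Type v) [AddCommGroup M] [Module A M] : Prop :=
  ∀ P ∈ Module.support A M, idealDepth A P.asIdeal M = depthAt A M P

/-- A module `M` is Cohen-Macaulay if `depth (M_P) = dim (M_P)` for every `P` in its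
support. -/
def IsCMModule (A : Type u) [CommRing A]
    (M : Type v) [AddCommGroup M] [Module A M] : Prop :=
  ∀ P ∈ Module.support A M, (depthAt A M P : WithBot ℕ∞) = heightAt A M P

/-- A ring is almost Cohen-Macaulay if it is an almost Cohen-Macaulay module over
itself. -/
abbrev IsAlmostCMRing (A : Type u) [CommRing A] : Prop := IsAlmostCMModule A A

/-- A ring is Cohen-Macaulay if it is a Cohen-Macaulay module over itself, i.e. all its
localizations at primes have depth equal to dimension. -/
abbrev IsCMRing (A : Type u) [CommRing A] : Prop := IsCMModule A A

/-- A ring satisfies `(C_n)` if it does so as a module over itself. -/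
abbrev RingCondC (A : Type u) [CommRing A] (n : ℕ) : Prop := CondC A n A

/-- A ring satisfies `(S_n)` if it does so as a module over itself. -/
abbrev RingSerreCondS (A : Type u) [CommRing A] (n : ℕ) : Prop := SerreCondS A n A





open CategoryTheory


/-- The `i`-th Ext group `Ext_A^i(M, N)`. -/
noncomputable def ExtGroup (A : Type u) [CommRing A] (M N : Type u)
    [AddCommGroup M] [Module A M] [AddCommGroup N] [Module A N] (i : ℕ) : Type u :=
  ((Ext A (ModuleCat.{u} A) i).obj (Opposite.op (ModuleCat.of A M))).obj (ModuleCat.of A N)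

/-- The grade of `M` with respect to `N` : `grade(M, N) = inf { i | Ext^i_A(M, N) ≠ 0 }`. -/
noncomputable def extGrade (A : Type u) [CommRing A] (M N : Type u)
    [AddCommGroup M] [Module A M] [AddCommGroup N] [Module A N] : ℕ∞ :=
  sInf {n : ℕ∞ | ∃ i : ℕ, n = i ∧ Nontrivial (ExtGroup A M N i)}

/-- The projective dimension of `M`, characterized by vanishing of Ext. -/
noncomputable def projDim (A : Type u) [CommRing A] (M : Type u)
    [AddCommGroup M] [Module A M] : ℕ∞ :=
  sInf {n : ℕ∞ | ∃ d : ℕ, n = d ∧ ∀ i : ℕ, d < i → ∀ Y : ModuleCat.{u} A,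
    Subsingleton (((Ext A (ModuleCat.{u} A) i).obj (Opposite.op (ModuleCat.of A M))).obj Y)}

/-- `M` is `N`-perfect if `grade(M, N) = pd(M) < ∞`. -/
def IsPerfectFor (A : Type u) [CommRing A] (M N : Type u)
    [AddCommGroup M] [Module A M] [AddCommGroup N] [Module A N] : Prop :=
  projDim A M ≠ ⊤ ∧ extGrade A M N = projDim A M

/-- The `i`-th Tor group `Tor^A_i(M, N)`. -/
noncomputable def TorGroup (A : Type u) [CommRing A] (M N : Type u)
    [AddCommGroup M] [Module A M] [AddCommGroup N] [Module A N] (i : ℕ) : Type u :=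
  ((Tor (ModuleCat.{u} A) i).obj (ModuleCat.of A M)).obj (ModuleCat.of A N)




lemma subsingleton_abelianExt_of_subsingleton_ext {A : Type u} [CommRing A]
    (M N : ModuleCat.{u} A) (i : ℕ)
    (h : Subsingleton (((Ext A (ModuleCat.{u} A) i).obj (Opposite.op M)).obj N)) :
    Subsingleton (Abelian.Ext M N i) := by
  let Q := projectiveResolution M
  have hex : (Q.complex.linearYonedaObj A N).ExactAt i := by
    rw [HomologicalComplex.exactAt_iff_isZero_homology]
    exact (ModuleCat.isZero_iff_subsingleton.mpr h).of_iso (Q.isoExt i N).symm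
  refine subsingleton_of_forall_eq 0 fun e ↦ ?_
  obtain ⟨f, hf, rfl⟩ := Q.extMk_surjective e (i + 1) rfl
  cases i with
  | zero =>
    rw [HomologicalComplex.exactAt_iff' _ 0 0 1 (by simp) (by simp),
      ShortComplex.moduleCat_exact_iff] at hex
    obtain ⟨g, hg⟩ := hex f hf
    obtain rfl : f = 0 := by
      have hg' : Q.complex.d 0 0 ≫ (show Q.complex.X 0 ⟶ N from g) = f := hg
      rw [← hg', Q.complex.shape 0 0 (by simp), Limits.zero_comp]
    simp
  | succ i =>
    rw [HomologicalComplex.exactAt_iff' _ i (i + 1) (i + 2) (by simp) (by simp),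
      ShortComplex.moduleCat_exact_iff] at hex
    exact (Q.extMk_eq_zero_iff f (i + 2) rfl hf i rfl).mpr (hex f hf)

lemma LinearMap.lTensor_rTensor_apply_comm {A : Type*} [CommRing A] {S T U V : Type*}
    [AddCommGroup S] [AddCommGroup T] [AddCommGroup U] [AddCommGroup V] [Module A S] [Module A T]
    [Module A U] [Module A V] (a : S →ₗ[A] T) (b : U →ₗ[A] V) (t : S ⊗[A] U) :
    b.lTensor T (a.rTensor U t) = a.rTensor V (b.lTensor S t) := by
  simp only [← LinearMap.comp_apply, LinearMap.lTensor_comp_rTensor,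
    LinearMap.rTensor_comp_lTensor]

section TensorChase

variable {A : Type*} [CommRing A] {X Y Z : Type*} [AddCommGroup X] [AddCommGroup Y]
  [AddCommGroup Z] [Module A X] [Module A Y] [Module A Z] {f : X →ₗ[A] Y} {g : Y →ₗ[A] Z}

lemma exists_lTensor_eq_of_rTensor_mem_range {Q₀ Q₁ Q₂ : Type*} [AddCommGroup Q₀]
    [AddCommGroup Q₁] [AddCommGroup Q₂] [Module A Q₀] [Module A Q₁] [Module A Q₂]
    [Module.Flat A Q₀] {d₁ : Q₁ →ₗ[A] Q₀} {d₂ : Q₂ →ₗ[A] Q₁}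
    (hf : Function.Injective f) (hfg : Function.Exact f g) (hg : Function.Surjective g)
    (hd : d₁ ∘ₗ d₂ = 0) (hZ : Function.Exact (d₂.lTensor Z) (d₁.lTensor Z))
    {x : X ⊗[A] Q₀} {y : Y ⊗[A] Q₁} (hxy : d₁.lTensor Y y = f.rTensor Q₀ x) :
    ∃ x' : X ⊗[A] Q₁, d₁.lTensor X x' = x := by
  have hz : d₁.lTensor Z (g.rTensor Q₁ y) = 0 := by
    rw [LinearMap.lTensor_rTensor_apply_comm, hxy]
    exact (rTensor_exact Q₀ hfg hg).apply_apply_eq_zero x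
  obtain ⟨z', hz'⟩ := (hZ _).mp hz
  obtain ⟨y', rfl⟩ := LinearMap.rTensor_surjective Q₂ hg z'
  rw [LinearMap.lTensor_rTensor_apply_comm] at hz'
  obtain ⟨x', hx'⟩ := (rTensor_exact Q₁ hfg hg (y - d₂.lTensor Y y')).mp (by
    rw [map_sub, hz', sub_self])
  refine ⟨x', Module.Flat.rTensor_preserves_injective_linearMap f hf ?_⟩
  rw [← LinearMap.lTensor_rTensor_apply_comm, hx', map_sub, hxy, sub_eq_self,
    ← LinearMap.comp_apply, ← LinearMap.lTensor_comp, hd]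
  simp

end TensorChase

/-- A complex computing `Tor (X, N)` from a resolution of `N` is exact in positive degrees. -/
def TensorResolutionExact {A : Type u} [CommRing A] {N : ModuleCat.{u} A}
    (Q : ProjectiveResolution N) (X : Type u) [AddCommGroup X] [Module A X] : Prop :=
  ∀ i, Function.Exact ((Q.complex.d (i + 2) (i + 1)).hom.lTensor X)
    ((Q.complex.d (i + 1) i).hom.lTensor X)

lemma tensorResolutionExact_of_subsingleton_tor {A : Type u} [CommRing A] {N : ModuleCat.{u} A}
    (Q : ProjectiveResolution N) (X : ModuleCat.{u} A)
    (h : ∀ i, 0 < i → Subsingleton (((Tor (ModuleCat.{u} A) i).obj X).obj N)) :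
    TensorResolutionExact Q X := by
  intro i
  have hex : ((((MonoidalCategory.tensoringLeft (ModuleCat.{u} A)).obj X).mapHomologicalComplex
      _).obj Q.complex).ExactAt (i + 1) := by
    rw [HomologicalComplex.exactAt_iff_isZero_homology]
    have h0 := h (i + 1) i.succ_pos
    exact (ModuleCat.isZero_iff_subsingleton.mpr h0).of_iso
      (Q.isoLeftDerivedObj ((MonoidalCategory.tensoringLeft (ModuleCat.{u} A)).obj X) (i + 1)).symm
  rw [HomologicalComplex.exactAt_iff' _ (i + 2) (i + 1) i (by simp) (by simp),
    ShortComplex.ShortExact.moduleCat_exact_iff_function_exact] at hex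
  exact hex

section

variable {A : Type u} [CommRing A] {N : ModuleCat.{u} A} {Q : ProjectiveResolution N}
  {X Y Z : Type u} [AddCommGroup X] [AddCommGroup Y]
  [AddCommGroup Z] [Module A X] [Module A Y] [Module A Z] {f : X →ₗ[A] Y} {g : Y →ₗ[A] Z}

instance (i : ℕ) : Module.Flat A (Q.complex.X i) :=
  have : Module.Projective A (Q.complex.X i) :=
    (IsProjective.iff_projective _).mpr (Q.projective i)
  inferInstance

lemma TensorResolutionExact.of_exact (hZ : TensorResolutionExact Q Z) [Module.Flat A Y]
    (hf : Function.Injective f) (hfg : Function.Exact f g) (hg : Function.Surjective g) :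
    TensorResolutionExact Q X := by
  intro i x
  have hd : ∀ j, (Q.complex.d (j + 1) j).hom ∘ₗ (Q.complex.d (j + 2) (j + 1)).hom = 0 := fun j ↦ by
    rw [← ModuleCat.hom_comp, Q.complex.d_comp_d, ModuleCat.hom_zero]
  refine ⟨fun hx ↦ ?_, ?_⟩
  · have hQ := (ShortComplex.ShortExact.moduleCat_exact_iff_function_exact _).mp (Q.exact_succ i)
    obtain ⟨y, hy⟩ := (Module.Flat.lTensor_exact Y hQ (f.rTensor _ x)).mp
      ((LinearMap.lTensor_rTensor_apply_comm f (Q.complex.d (i + 1) i).hom x).trans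
        (by rw [hx, map_zero]))
    exact exists_lTensor_eq_of_rTensor_mem_range hf hfg hg (hd (i + 1)) (hZ (i + 1)) hy
  · rintro ⟨x, rfl⟩
    rw [← LinearMap.comp_apply, ← LinearMap.lTensor_comp, hd]
    simp

lemma TensorResolutionExact.rTensor_injective (hZ : TensorResolutionExact Q Z)
    (hf : Function.Injective f) (hfg : Function.Exact f g) (hg : Function.Surjective g) :
    Function.Injective (f.rTensor N) := by
  have hd : (Q.complex.d 1 0).hom ∘ₗ (Q.complex.d 2 1).hom = 0 := by
    rw [← ModuleCat.hom_comp, Q.complex.d_comp_d, ModuleCat.hom_zero]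
  let π : Q.complex.X 0 →ₗ[A] N := (Q.π.f 0).hom
  have hQ : Function.Exact (Q.complex.d 1 0).hom π :=
    (ShortComplex.ShortExact.moduleCat_exact_iff_function_exact _).mp Q.exact₀
  have hπ : Function.Surjective π :=
    (ModuleCat.epi_iff_surjective (Q.π.f 0)).mp inferInstance
  rw [injective_iff_map_eq_zero]
  intro x hx
  obtain ⟨x₀, rfl⟩ := LinearMap.lTensor_surjective X hπ x
  rw [← LinearMap.lTensor_rTensor_apply_comm] at hx
  obtain ⟨y, hy⟩ := (lTensor_exact Y hQ hπ _).mp hx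
  obtain ⟨x₁, rfl⟩ := exists_lTensor_eq_of_rTensor_mem_range hf hfg hg hd (hZ 0) hy
  exact (lTensor_exact X hQ hπ).apply_apply_eq_zero x₁

end

section ExtTensor

variable {A : Type u} [CommRing A] {R : Type u} [CommRing R]
  (G : ModuleCat.{u} A ⥤ ModuleCat.{u} R) [G.Additive]

lemma subsingleton_ext_of_sum_comp_eq_id {k X Y : ModuleCat.{u} R} {ι : Type*} [Fintype ι]
    (a : ι → (X ⟶ Y)) (b : ι → (Y ⟶ X)) (hab : ∑ j, a j ≫ b j = 𝟙 X) (i : ℕ)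
    (hY : Subsingleton (Abelian.Ext k Y i)) : Subsingleton (Abelian.Ext k X i) := by
  refine subsingleton_of_forall_eq 0 fun e ↦ ?_
  rw [← e.comp_mk₀_id, ← hab, Abelian.Ext.mk₀_sum, Abelian.Ext.comp_sum]
  refine Finset.sum_eq_zero fun j _ ↦ ?_
  rw [← Abelian.Ext.mk₀_comp_mk₀, ← Abelian.Ext.comp_assoc _ _ _ (add_zero i) (zero_add 0) (by simp),
    Subsingleton.elim (e.comp (Abelian.Ext.mk₀ (a j)) (add_zero i)) 0, Abelian.Ext.zero_comp]

lemma subsingleton_ext_map_tensor_of_projective (M N : Type u) [AddCommGroup M] [Module A M]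
    [AddCommGroup N] [Module A N] [Module.Finite A M] [Module.Projective A M]
    (k : ModuleCat.{u} R) (i : ℕ)
    (hN : Subsingleton (Abelian.Ext k (G.obj (ModuleCat.of A N)) i)) :
    Subsingleton (Abelian.Ext k (G.obj (ModuleCat.of A (M ⊗[A] N))) i) := by
  obtain ⟨n, f, g, hf, hg, hfg⟩ := Module.Finite.exists_comp_eq_id_of_projective A M
  let a : Fin n → (ModuleCat.of A (M ⊗[A] N) ⟶ ModuleCat.of A N) := fun j ↦ ModuleCat.ofHom
    ((TensorProduct.lid A N).toLinearMap ∘ₗ (LinearMap.proj j ∘ₗ g).rTensor N)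
  let b : Fin n → (ModuleCat.of A N ⟶ ModuleCat.of A (M ⊗[A] N)) := fun j ↦ ModuleCat.ofHom
    (TensorProduct.mk A M N (f (Pi.single j 1)))
  have hab : ∑ j, a j ≫ b j = 𝟙 (ModuleCat.of A (M ⊗[A] N)) := by
    ext : 1
    refine TensorProduct.ext' fun m x ↦ ?_
    have hm : ∑ j, g m j • f (Pi.single j 1) = m := by
      conv_rhs => rw [← LinearMap.id_apply (R := A) m, ← hfg, LinearMap.comp_apply,
        pi_eq_sum_univ' (g m), map_sum]
      simp
    conv_rhs => rw [← hm]
    simp [a, b, ModuleCat.hom_sum, TensorProduct.sum_tmul, TensorProduct.smul_tmul]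
  exact subsingleton_ext_of_sum_comp_eq_id (fun j ↦ G.map (a j)) (fun j ↦ G.map (b j))
    (by simp_rw [← G.map_comp, ← G.map_sum, hab, G.map_id]) i hN

lemma subsingleton_ext_map_tensor [IsNoetherianRing A] [Limits.PreservesFiniteLimits G]
    [Limits.PreservesFiniteColimits G] {N : ModuleCat.{u} A} (Q : ProjectiveResolution N)
    (k : ModuleCat.{u} R) (d : ℕ) (hN : ∀ i < d, Subsingleton (Abelian.Ext k (G.obj N) i))
    (p : ℕ) (M : Type u) [AddCommGroup M] [Module A M] [Module.Finite A M]
    (hM : HasProjectiveDimensionLT (ModuleCat.of A M) (p + 1)) (hQ : TensorResolutionExact Q M)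
    (i : ℕ) (hi : i + p < d) :
    Subsingleton (Abelian.Ext k (G.obj (ModuleCat.of A (M ⊗[A] N))) i) := by
  induction p generalizing M i with
  | zero =>
    have : Module.Projective A M := (IsProjective.iff_projective _).mpr
      (projective_iff_hasProjectiveDimensionLT_one.mpr hM)
    exact subsingleton_ext_map_tensor_of_projective G M N k i (hN i hi)
  | succ p ih =>
    obtain ⟨r, g, hg⟩ := Module.Finite.exists_fin' A M
    have hf : Function.Injective (LinearMap.ker g).subtype := Subtype.val_injective
    have hfg : Function.Exact (LinearMap.ker g).subtype g := LinearMap.exact_subtype_ker_map g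
    have hker : HasProjectiveDimensionLT (ModuleCat.of A (LinearMap.ker g)) (p + 1) :=
      (LinearMap.shortExact_shortComplexKer hg).hasProjectiveDimensionLT_X₁ (p + 1)
        (have : Projective (ModuleCat.of A (Fin r → A)) :=
          (IsProjective.iff_projective _).mp inferInstance
         hasProjectiveDimensionLT_of_ge _ 1 (p + 1) (by lia)) hM
    have hX₁ := ih (LinearMap.ker g) hker (hQ.of_exact hf hfg hg) (i + 1) (by lia)
    have hX₂ := subsingleton_ext_map_tensor_of_projective G (Fin r → A) N k i (hN i (by lia))
    let f' : LinearMap.ker g ⊗[A] N →ₗ[A] (Fin r → A) ⊗[A] N :=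
      (LinearMap.ker g).subtype.rTensor N
    let g' : (Fin r → A) ⊗[A] N →ₗ[A] M ⊗[A] N := g.rTensor N
    have hfg' : Function.Exact f' g' := rTensor_exact N hfg hg
    let S : ShortComplex (ModuleCat.{u} A) :=
      ShortComplex.mk (ModuleCat.ofHom (X := LinearMap.ker g ⊗[A] N) f') (ModuleCat.ofHom g')
        (by rw [← ModuleCat.ofHom_comp, hfg'.linearMap_comp_eq_zero]; rfl)
    have hS : S.ShortExact := ModuleCat.shortComplex_shortExact S hfg'
      (hQ.rTensor_injective hf hfg hg) (LinearMap.rTensor_surjective N hg)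
    refine subsingleton_of_forall_eq 0 fun e ↦ ?_
    obtain ⟨x, rfl⟩ := Abelian.Ext.covariant_sequence_exact₃ k (hS.map_of_exact G) e rfl
      (hX₁.elim _ _)
    obtain rfl : x = 0 := hX₂.elim _ _
    exact Abelian.Ext.zero_comp ..

end ExtTensor

section Depth

open IsLocalRing

lemma maximalIdeal_smul_top_lt_top {R : Type*} [CommRing R] [IsLocalRing R] {L : Type*}
    [AddCommGroup L] [Module R L] [Module.Finite R L] [Nontrivial L] :
    maximalIdeal R • (⊤ : Submodule R L) < ⊤ :=
  lt_top_iff_ne_top.mpr (Submodule.top_ne_ideal_smul_of_le_jacobson_annihilator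
    (maximalIdeal_le_jacobson _)).symm

lemma support_quotient_maximalIdeal {R : Type*} [CommRing R] [IsLocalRing R] :
    Module.support R (R ⧸ maximalIdeal R) = PrimeSpectrum.zeroLocus (maximalIdeal R) := by
  rw [Module.support_eq_zeroLocus, Ideal.annihilator_quotient]

lemma le_localDepth_of_subsingleton_ext {R : Type u} [CommRing R] [IsLocalRing R]
    [IsNoetherianRing R] {L : Type u} [AddCommGroup L] [Module R L] [Module.Finite R L]
    [Nontrivial L] (d : ℕ) (h : ∀ i < d, Subsingleton
      (Abelian.Ext (ModuleCat.of R (R ⧸ maximalIdeal R)) (ModuleCat.of R L) i)) :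
    (d : ℕ∞) ≤ localDepth R L := by
  obtain ⟨rs, hlen, hmem, hreg⟩ := ModuleCat.exists_isRegular_of_exists_subsingleton_ext
    (maximalIdeal R) d (ModuleCat.of R L) maximalIdeal_smul_top_lt_top
    (ModuleCat.of R (R ⧸ maximalIdeal R)) support_quotient_maximalIdeal h
  exact le_sSup ⟨rs, by rw [hlen], hmem, hreg⟩

lemma localDepth_le_add_of_subsingleton_ext {R : Type u} [CommRing R] [IsLocalRing R]
    [IsNoetherianRing R] {L L' : Type u} [AddCommGroup L] [Module R L] [Module.Finite R L]
    [Nontrivial L] [AddCommGroup L'] [Module R L'] [Module.Finite R L'] [Nontrivial L'] (p : ℕ)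
    (h : ∀ d : ℕ, (∀ i < d, Subsingleton
      (Abelian.Ext (ModuleCat.of R (R ⧸ maximalIdeal R)) (ModuleCat.of R L) i)) →
      ∀ i, i + p < d → Subsingleton
        (Abelian.Ext (ModuleCat.of R (R ⧸ maximalIdeal R)) (ModuleCat.of R L') i)) :
    localDepth R L ≤ localDepth R L' + p := by
  refine sSup_le ?_
  rintro _ ⟨rs, rfl, hmem, hreg⟩
  have hext := ModuleCat.subsingleton_ext_of_exists_isRegular (maximalIdeal R)
    (ModuleCat.of R (R ⧸ maximalIdeal R)) support_quotient_maximalIdeal.subset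
    (ModuleCat.of R L) maximalIdeal_smul_top_lt_top rs hmem hreg
  have hle := le_localDepth_of_subsingleton_ext (L := L') (rs.length - p)
    fun i hi ↦ h _ hext i (by lia)
  calc (rs.length : ℕ∞) ≤ ((rs.length - p : ℕ) : ℕ∞) + p := by norm_cast; lia
    _ ≤ _ := by gcongr

end Depth

section Localization

variable {A : Type u} [CommRing A] (M N : Type u) [AddCommGroup M]
  [Module A M] [AddCommGroup N] [Module A N]

lemma mem_support_of_mem_support_tensor [Module.Finite A M] [Module.Finite A N]
    {P : PrimeSpectrum A}
    (hP : P ∈ Module.support A (M ⊗[A] N)) : P ∈ Module.support A N := by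
  rw [Module.support_eq_zeroLocus] at hP ⊢
  refine PrimeSpectrum.zeroLocus_anti_mono (fun a ha ↦ ?_) hP
  rw [SetLike.mem_coe, Module.mem_annihilator] at ha ⊢
  intro t
  induction t with
  | zero => simp
  | tmul m n => rw [← TensorProduct.tmul_smul, ha, TensorProduct.tmul_zero]
  | add x y hx hy => rw [smul_add, hx, hy, add_zero]

lemma depthAt_le_depthAt_tensor_add [IsNoetherianRing A] [Module.Finite A M] [Module.Finite A N]
    (p : ℕ)
    (hM : HasProjectiveDimensionLT (ModuleCat.of A M) (p + 1))
    (htor : ∀ i : ℕ, 0 < i → Subsingleton (TorGroup A M N i))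
    (P : PrimeSpectrum A) (hP : P ∈ Module.support A (M ⊗[A] N)) :
    depthAt A N P ≤ depthAt A (M ⊗[A] N) P + p := by
  have : Nontrivial (LocalizedModule P.asIdeal.primeCompl N) :=
    mem_support_of_mem_support_tensor M N hP
  have : Nontrivial (LocalizedModule P.asIdeal.primeCompl (M ⊗[A] N)) := hP
  let G := ModuleCat.localizedModuleFunctor.{u} (R := A) P.asIdeal.primeCompl
  have e (L : Type u) [AddCommGroup L] [Module A L] : G.obj (ModuleCat.of A L) ≅
      ModuleCat.of (Localization.AtPrime P.asIdeal) (LocalizedModule P.asIdeal.primeCompl L) :=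
    (Shrink.linearEquiv (Localization.AtPrime P.asIdeal)
      (LocalizedModule P.asIdeal.primeCompl L)).toModuleIso
  refine localDepth_le_add_of_subsingleton_ext p fun d hd i hi ↦ ?_
  have := subsingleton_ext_map_tensor G (projectiveResolution (ModuleCat.of A N))
    (ModuleCat.of _ (_ ⧸ IsLocalRing.maximalIdeal (Localization.AtPrime P.asIdeal))) d
    (fun j hj ↦ subsingleton_ext_of_sum_comp_eq_id (ι := Unit) (fun _ ↦ (e N).hom)
      (fun _ ↦ (e N).inv) (by simp) j (hd j hj)) p M hM
    (tensorResolutionExact_of_subsingleton_tor _ _ htor) i hi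
  exact subsingleton_ext_of_sum_comp_eq_id (ι := Unit) (fun _ ↦ (e _).inv)
      (fun _ ↦ (e _).hom) (by simp) i this

lemma annihilator_localizedModule_le_tensor (S : Submonoid A) :
    Module.annihilator (Localization S) (LocalizedModule S N) ≤
      Module.annihilator (Localization S) (LocalizedModule S (M ⊗[A] N)) := by
  intro r hr
  rw [Module.mem_annihilator] at hr ⊢
  intro t
  induction t using LocalizedModule.induction_on with
  | h x s =>
    induction x with
    | zero => simp
    | tmul m n =>
      have h := congrArg (LocalizedModule.map S (TensorProduct.mk A M N m))
        (hr (LocalizedModule.mk n s))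
      rwa [map_smul, LocalizedModule.map_mk, map_zero] at h
    | add x y hx hy => rw [IsLocalizedModule.mk_eq_mk', IsLocalizedModule.mk'_add, smul_add,
        ← IsLocalizedModule.mk_eq_mk', ← IsLocalizedModule.mk_eq_mk', hx, hy, add_zero]

lemma heightAt_tensor_add_le [IsNoetherianRing A] [Module.Finite A M] [Module.Finite A N]
    (rs : List A) (hrs : ∀ r ∈ rs, r ∈ Module.annihilator A M)
    (hreg : RingTheory.Sequence.IsWeaklyRegular N rs)
    (P : PrimeSpectrum A) (hP : P ∈ Module.support A (M ⊗[A] N)) :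
    heightAt A (M ⊗[A] N) P + rs.length ≤ heightAt A N P := by
  let R := Localization.AtPrime P.asIdeal
  let NP := LocalizedModule P.asIdeal.primeCompl N
  let TP := LocalizedModule P.asIdeal.primeCompl (M ⊗[A] N)
  have : Nontrivial NP := mem_support_of_mem_support_tensor M N hP
  have hann : ∀ r ∈ Module.annihilator A (M ⊗[A] N), algebraMap A R r ∈ Module.annihilator R TP := by
    intro r hr
    rw [Module.mem_annihilator] at hr ⊢
    intro t
    induction t using LocalizedModule.induction_on with
    | h m s => rw [algebraMap_smul, LocalizedModule.smul'_mk, hr, LocalizedModule.zero_mk]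
  have hrsT : ∀ r ∈ rs, r ∈ Module.annihilator A (M ⊗[A] N) := by
    intro r hr
    rw [Module.mem_annihilator]
    intro t
    induction t with
    | zero => simp
    | tmul m n =>
      rw [TensorProduct.smul_tmul', Module.mem_annihilator.mp (hrs r hr), TensorProduct.zero_tmul]
    | add x y hx hy => rw [smul_add, hx, hy, add_zero]
  have hregP := hreg.isRegular_of_isLocalizedModule_of_mem R P.asIdeal
    (LocalizedModule.mkLinearMap P.asIdeal.primeCompl N) (fun r hr ↦ by
      rw [Module.support_eq_zeroLocus] at hP
      exact hP (hrsT r hr))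
  have hdim := Module.supportDim_add_length_eq_supportDim_of_isRegular _ hregP
  rw [List.length_map] at hdim
  change Module.supportDim R TP + rs.length ≤ Module.supportDim R NP
  rw [← hdim]
  gcongr
  refine Order.krullDim_le_of_strictMono (Set.inclusion fun a ha ↦ ?_) fun _ _ h ↦ h
  rw [Module.support_quotient]
  rw [Module.support_eq_zeroLocus] at ha ⊢
  refine ⟨PrimeSpectrum.zeroLocus_anti_mono (annihilator_localizedModule_le_tensor M N _) ha, ?_⟩
  refine PrimeSpectrum.zeroLocus_anti_mono (SetLike.coe_subset_coe.mpr (Ideal.span_le.mpr ?_)) ha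
  intro x hx
  obtain ⟨r, hr, rfl⟩ := List.mem_map.mp hx
  exact hann r (hrsT r hr)

end Localization

lemma hasProjectiveDimensionLT_of_projDim_eq {A : Type u} [CommRing A] (M : Type u)
    [AddCommGroup M] [Module A M] (p : ℕ) (hpd : projDim A M = p) :
    HasProjectiveDimensionLT (ModuleCat.of A M) (p + 1) := by
  have hmem := csInf_mem (s := {n : ℕ∞ | ∃ d : ℕ, n = d ∧ ∀ i : ℕ, d < i → ∀ Y : ModuleCat.{u} A,
    Subsingleton (((Ext A (ModuleCat.{u} A) i).obj (Opposite.op (ModuleCat.of A M))).obj Y)}) (by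
      by_contra hne
      rw [projDim, Set.not_nonempty_iff_eq_empty.mp hne, sInf_empty] at hpd
      exact ENat.natCast_ne_top p hpd.symm)
  obtain ⟨d, hd, h⟩ := hmem
  obtain rfl : p = d := by exact_mod_cast hpd.symm.trans hd
  exact HasProjectiveDimensionLT.mk fun i hi Y e ↦
    (subsingleton_abelianExt_of_subsingleton_ext _ Y i (h i hi Y)).elim _ _

lemma subsingleton_abelianExt_of_lt_extGrade {A : Type u} [CommRing A] (M N : Type u)
    [AddCommGroup M] [Module A M] [AddCommGroup N] [Module A N] (i : ℕ)
    (h : (i : ℕ∞) < extGrade A M N) :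
    Subsingleton (Abelian.Ext (ModuleCat.of A M) (ModuleCat.of A N) i) := by
  refine subsingleton_abelianExt_of_subsingleton_ext _ _ i ?_
  by_contra hne
  exact notMem_of_lt_csInf h (OrderBot.bddBelow _) ⟨i, rfl, not_subsingleton_iff_nontrivial.mp hne⟩

lemma exists_isRegular_of_le_extGrade {A : Type u} [CommRing A] [IsNoetherianRing A]
    [IsLocalRing A] (M N : Type u) [AddCommGroup M] [Module A M] [Module.Finite A M] [Nontrivial M]
    [AddCommGroup N] [Module A N] [Module.Finite A N] [Nontrivial N] (p : ℕ)
    (h : (p : ℕ∞) ≤ extGrade A M N) :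
    ∃ rs : List A, rs.length = p ∧ (∀ r ∈ rs, r ∈ Module.annihilator A M) ∧
      RingTheory.Sequence.IsRegular N rs := by
  refine ModuleCat.exists_isRegular_of_exists_subsingleton_ext (Module.annihilator A M) p
    (ModuleCat.of A N) (lt_of_le_of_lt (Submodule.smul_mono_left ?_) maximalIdeal_smul_top_lt_top)
    (ModuleCat.of A M) Module.support_eq_zeroLocus
    fun i hi ↦ subsingleton_abelianExt_of_lt_extGrade M N i (lt_of_lt_of_le (by exact_mod_cast hi) h)
  exact IsLocalRing.le_maximalIdeal
    (by simpa [Module.annihilator_eq_top_iff] using not_subsingleton M)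

theorem tensor_condC_of_perfect (A : Type u) [CommRing A] [IsNoetherianRing A] [IsLocalRing A]
    (n : ℕ) (M N : Type u)
    [AddCommGroup M] [Module A M] [Module.Finite A M] [Nontrivial M]
    [AddCommGroup N] [Module A N] [Module.Finite A N] [Nontrivial N]
    (p : ℕ) (hpd : projDim A M = (p : ℕ∞)) (hperf : extGrade A M N = projDim A M)
    (hpn : p ≤ n)
    (hN : CondC A n N)
    (htor : ∀ i : ℕ, 0 < i → Subsingleton (TorGroup A M N i)) :
    CondC A (n - p) (M ⊗[A] N) := by
  obtain ⟨rs, hlen, hann, hreg⟩ := exists_isRegular_of_le_extGrade M N p (hperf.trans hpd).ge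
  intro P hP
  have hdepth := depthAt_le_depthAt_tensor_add M N p
    (hasProjectiveDimensionLT_of_projDim_eq M p hpd) htor P hP
  have hheight := heightAt_tensor_add_le M N rs hann hreg.toIsWeaklyRegular P hP
  have hCN := hN P (mem_support_of_mem_support_tensor M N hP)
  rw [hlen] at hheight
  have hcancel : AddLECancellable (p : WithBot ℕ∞) :=
    (ENat.addLECancellable_natCast p).withBot
  refine hcancel.add_le_add_iff_right.mp ?_
  calc min ((n - p : ℕ) : WithBot ℕ∞) (heightAt A (M ⊗[A] N) P) + p
      ≤ min (n : WithBot ℕ∞) (heightAt A N P) := by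
        refine le_min ?_ ((add_le_add_left (min_le_right _ _) _).trans hheight)
        refine (add_le_add_left (min_le_left _ _) _).trans ?_
        exact_mod_cast (Nat.sub_add_cancel hpn).le
    _ ≤ (depthAt A N P : WithBot ℕ∞) + 1 := hCN
    _ ≤ ((depthAt A (M ⊗[A] N) P + p : ℕ∞) : WithBot ℕ∞) + 1 := by gcongr; exact_mod_cast hdepth
    _ = (depthAt A (M ⊗[A] N) P : WithBot ℕ∞) + 1 + p := by
        push_cast
        exact add_right_comm _ _ _

end
end

section
/- Let (A_i, f_{ij})_{i,j ∈ Λ} be a direct system of noetherian rings with direct limit A = lim_{i ∈ Λ} A_i. Assume (a) A is noetherian, (b) each transition morphism f_{ij} (i ≤ j) is flat, and (c) each A_i is an almost Cohen-Macaulay ring. Then A is an almost Cohen-Macaulay ring. Moreover, if instead of (c) each A_i satisfies the condition (C_n) for a fixed natural number n, then A satisfies the condition (C_n). -/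
noncomputable section

open TensorProduct

universe u v w





open RingTheory.Sequence IsLocalRing

section Depth

variable {R : Type u} {S : Type v} [CommRing R] [CommRing S]

/-- Weak regularity of a sequence descends along a faithfully flat ring extension. -/
lemma RingTheory.Sequence.IsWeaklyRegular.of_map_of_faithfullyFlat [Algebra R S]
    [Module.FaithfullyFlat R S] {rs : List R}
    (h : IsWeaklyRegular S (rs.map (algebraMap R S))) : IsWeaklyRegular R rs := by
  refine ⟨fun i hi ↦ ?_⟩
  have key := h.regular_mod_prev i (by simpa using hi)
  rw [isSMulRegular_quotient_iff_mem_of_smul_mem] at key ⊢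
  intro x hx
  rw [← List.map_take, ← Ideal.map_ofList] at key
  simp only [List.getElem_map, smul_eq_mul, Ideal.mul_top] at key hx ⊢
  rw [← Ideal.comap_map_eq_self_of_faithfullyFlat (B := S) (Ideal.ofList _)]
  refine key _ ?_
  rw [← map_mul]
  exact Ideal.mem_map_of_mem _ hx

/-- The equational criterion for flatness, for ring homomorphisms. -/
lemma RingHom.flat_iff_forall_isTrivialRelation {φ : R →+* S} :
    φ.Flat ↔ ∀ {l : ℕ} {a : Fin l → R} {x : Fin l → S}, ∑ t, φ (a t) * x t = 0 →
      ∃ (n : ℕ) (b : Fin l → Fin n → R) (y : Fin n → S),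
        (∀ t, x t = ∑ s, φ (b t s) * y s) ∧ ∀ s, ∑ t, a t * b t s = 0 := by
  let := φ.toAlgebra
  exact Module.Flat.iff_forall_isTrivialRelation

/-- The depth of an ideal does not decrease under flat extensions, as long as the target ideal is
proper. -/
lemma RingHom.Flat.idealDepth_le {φ : R →+* S} (hφ : φ.Flat) {I : Ideal R} {J : Ideal S}
    (hJ : J ≠ ⊤) (hIJ : I ≤ J.comap φ) : idealDepth R I R ≤ idealDepth S J S := by
  algebraize [φ]
  refine sSup_le_sSup ?_
  rintro _ ⟨rs, rfl, hmem, hreg⟩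
  have hmem' : ∀ s ∈ rs.map φ, s ∈ J := by
    simpa using fun r hr ↦ hIJ (hmem r hr)
  refine ⟨rs.map φ, by simp, hmem', ⟨hreg.toIsWeaklyRegular.of_flat, fun h ↦ hJ ?_⟩⟩
  rw [smul_eq_mul, Ideal.mul_top] at h
  exact top_le_iff.mp (h.le.trans (Ideal.span_le.mpr hmem'))

/-- The localization of a ring as a module over itself is the localized ring. -/
def localizedModuleSelfEquiv (T : Submonoid R) :
    LocalizedModule T R ≃ₗ[Localization T] Localization T :=
  (IsLocalizedModule.linearEquiv T (LocalizedModule.mkLinearMap T R)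
    (Algebra.linearMap R (Localization T))).extendScalarsOfIsLocalization T (Localization T)

lemma idealDepth_congr {M N : Type*} [AddCommGroup M] [AddCommGroup N] [Module R M] [Module R N]
    (e : M ≃ₗ[R] N) (I : Ideal R) : idealDepth R I M = idealDepth R I N := by
  simp only [idealDepth, e.isRegular_congr]

lemma depthAt_self (P : PrimeSpectrum R) :
    depthAt R R P = localDepth (Localization.AtPrime P.asIdeal)
      (Localization.AtPrime P.asIdeal) :=
  idealDepth_congr (localizedModuleSelfEquiv _) _

lemma heightAt_self (P : PrimeSpectrum R) : heightAt R R P = P.asIdeal.height := by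
  rw [← IsLocalization.AtPrime.ringKrullDim_eq_height P.asIdeal (Localization.AtPrime P.asIdeal),
    ← Module.supportDim_self_eq_ringKrullDim]
  exact Module.supportDim_eq_of_equiv (localizedModuleSelfEquiv _)

lemma mem_support_self (P : PrimeSpectrum R) : P ∈ Module.support R R := by
  simp [Module.mem_support_iff_of_finite, Module.annihilator_eq_bot.mpr]

lemma idealDepth_le_depthAt (P : PrimeSpectrum R) :
    idealDepth R P.asIdeal R ≤ depthAt R R P := by
  rw [depthAt_self]
  refine RingHom.Flat.idealDepth_le (φ := algebraMap R (Localization.AtPrime P.asIdeal))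
    (RingHom.flat_algebraMap_iff.mpr inferInstance) (maximalIdeal.isMaximal _).ne_top ?_
  exact (Localization.AtPrime.under_maximalIdeal (I := P.asIdeal)).ge

/-- The map induced by a ring homomorphism `φ : R →+* S` between the localizations at a prime of `S`
and at its contraction to `R`. -/
abbrev PrimeSpectrum.localizationMap (P : PrimeSpectrum S) (φ : R →+* S) :
    Localization.AtPrime (P.comap φ).asIdeal →+* Localization.AtPrime P.asIdeal :=
  Localization.localRingHom _ _ φ (P.comap_asIdeal φ)

lemma RingHom.Flat.depthAt_comap_le {φ : R →+* S} (hφ : φ.Flat) (P : PrimeSpectrum S) :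
    depthAt R R (P.comap φ) ≤ depthAt S S P := by
  rw [depthAt_self, depthAt_self]
  exact (hφ.localRingHom P.asIdeal (P.comap φ).asIdeal (P.comap_asIdeal φ)).idealDepth_le
    (maximalIdeal.isMaximal _).ne_top
    fun r hr ↦ (map_mem_nonunits_iff (P.localizationMap φ) r).mpr hr

/-- If a regular sequence of `S_P` lifts to `R_p` along a flat map `R → S`, where `p` is the
contraction of `P`, then its length is at most the depth of `R_p`. -/
lemma RingHom.Flat.length_le_depthAt_comap {φ : R →+* S} (hφ : φ.Flat) (P : PrimeSpectrum S)
    (rs : List (Localization.AtPrime (P.comap φ).asIdeal))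
    (hmem : ∀ r ∈ rs.map (P.localizationMap φ), r ∈ maximalIdeal _)
    (hreg : IsWeaklyRegular (Localization.AtPrime P.asIdeal)
      (rs.map (P.localizationMap φ))) :
    (rs.length : ℕ∞) ≤ depthAt R R (P.comap φ) := by
  rw [depthAt_self]
  have hloc := hφ.localRingHom P.asIdeal (P.comap φ).asIdeal (P.comap_asIdeal φ)
  have hmem' : ∀ r ∈ rs, r ∈ maximalIdeal _ := fun r hr ↦
    (map_mem_nonunits_iff (P.localizationMap φ) r).mp
      (hmem _ (List.mem_map_of_mem hr))
  algebraize [P.localizationMap φ]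
  have : IsLocalHom (algebraMap (Localization.AtPrime (P.comap φ).asIdeal)
      (Localization.AtPrime P.asIdeal)) :=
    inferInstanceAs (IsLocalHom (P.localizationMap φ))
  have := Module.FaithfullyFlat.of_flat_of_isLocalHom
    (A := Localization.AtPrime (P.comap φ).asIdeal) (B := Localization.AtPrime P.asIdeal)
  exact le_sSup ⟨rs, rfl, hmem', .of_isWeaklyRegular_of_mem_maximalIdeal _ hmem'
    hreg.of_map_of_faithfullyFlat⟩

lemma Ideal.height_le_height_comap_of_le_map [IsNoetherianRing R] [IsNoetherianRing S]
    (φ : R →+* S) (P : Ideal S) [P.IsPrime] (h : P ≤ (P.comap φ).map φ) :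
    P.height ≤ (P.comap φ).height := by
  algebraize [φ]
  have : P.LiesOver (P.comap φ) := ⟨rfl⟩
  have hle := Ideal.height_le_height_add_of_liesOver (P.comap φ) P
  have hP : (P.comap φ).map φ = P := Ideal.map_comap_le.antisymm h
  have hbot : P.map (Ideal.Quotient.mk <| (P.comap φ).map (algebraMap R S)) = ⊥ := by
    rw [Ideal.map_eq_bot_iff_le_ker, Ideal.mk_ker]
    exact h
  have : IsDomain (S ⧸ (P.comap φ).map (algebraMap R S)) := by
    change IsDomain (S ⧸ (P.comap φ).map φ)
    rw [hP]
    infer_instance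
  rwa [hbot, Ideal.height_bot, add_zero] at hle

end Depth

namespace Ring.DirectLimit

variable {ι : Type u} [Preorder ι] [IsDirected ι (· ≤ ·)] [Nonempty ι] {G : ι → Type v}
  [∀ i, CommRing (G i)] {f : ∀ i j, i ≤ j → G i →+* G j}

/-- A finite set of elements of a directed colimit of rings lifts to some stage. -/
lemma exists_subset_range_of {s : Set (Ring.DirectLimit G fun i j h ↦ f i j h)}
    (hs : s.Finite) : ∃ i, s ⊆ Set.range (of G (fun i j h ↦ f i j h) i) := by
  have hdir : Directed (· ⊆ ·) fun i ↦ Set.range (of G (fun i j h ↦ f i j h) i) := by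
    refine directed_of_isDirected_le fun i j hij ↦ ?_
    rintro _ ⟨x, rfl⟩
    exact ⟨f i j hij x, of_f hij x⟩
  obtain ⟨i, hi⟩ := hdir.exists_mem_subset_of_finset_subset_biUnion (s := hs.toFinset)
    fun x _ ↦ Set.mem_iUnion.mpr (exists_of x)
  exact ⟨i, by simpa using hi⟩

/-- The canonical maps to a directed colimit of rings with flat transition maps are flat. -/
lemma flat_of [DirectedSystem G (fun i j h => ⇑(f i j h))]
    (hflat : ∀ (i j : ι) (h : i ≤ j), (f i j h).Flat) (i : ι) :
    (of G (fun i j h ↦ f i j h) i).Flat := by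
  refine RingHom.flat_iff_forall_isTrivialRelation.mpr fun {l} a x hx ↦ ?_
  obtain ⟨j, hj⟩ := exists_subset_range_of (Set.finite_range x)
  obtain ⟨k, hik, hjk⟩ := exists_ge_ge i j
  have hlift : ∀ t, ∃ y, of G (fun i j h ↦ f i j h) k y = x t := fun t ↦ by
    obtain ⟨y, hy⟩ := hj ⟨t, rfl⟩
    exact ⟨f j k hjk y, (of_f hjk y).trans hy⟩
  choose y hy using hlift
  have hzero : of G (fun i j h ↦ f i j h) k (∑ t, f i k hik (a t) * y t) = 0 := by
    simpa [map_sum, hy] using hx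
  obtain ⟨m, hkm, hm⟩ := of.zero_exact hzero
  have hrel : ∑ t, f i m (hik.trans hkm) (a t) * f k m hkm (y t) = 0 := by
    rw [← hm, map_sum]
    refine Finset.sum_congr rfl fun t _ ↦ ?_
    rw [map_mul]
    exact congrArg (· * _) (DirectedSystem.map_map' f hik hkm (a t)).symm
  obtain ⟨n, b, z, hz, hb⟩ :=
    RingHom.flat_iff_forall_isTrivialRelation.mp (hflat i m (hik.trans hkm)) hrel
  refine ⟨n, b, fun s ↦ of G (fun i j h ↦ f i j h) m (z s), fun t ↦ ?_, hb⟩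
  rw [← hy, ← of_f hkm, hz, map_sum]
  simp

/-- A finite list of elements of a localization of a directed colimit at a prime lifts to the
corresponding localization of some stage. -/
lemma exists_map_localRingHom_eq
    (P : PrimeSpectrum (Ring.DirectLimit G fun i j h ↦ f i j h))
    (rs : List (Localization.AtPrime P.asIdeal)) :
    ∃ (i : ι) (ss : List (Localization.AtPrime
        (P.comap (of G (fun i j h ↦ f i j h) i)).asIdeal)),
      ss.map (P.localizationMap (of G (fun i j h ↦ f i j h) i)) = rs := by
  choose a s has using fun r ↦ IsLocalization.exists_mk'_eq P.asIdeal.primeCompl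
    (S := Localization.AtPrime P.asIdeal) r
  have hfin : (Set.image a {r | r ∈ rs} ∪
      Set.image (fun r ↦ (s r : DirectLimit G _)) {r | r ∈ rs}).Finite :=
    (rs.finite_toSet.image _).union (rs.finite_toSet.image _)
  obtain ⟨i, hi⟩ := exists_subset_range_of hfin
  refine ⟨i, ?_⟩
  change rs ∈ Set.range (List.map _)
  rw [Set.range_list_map]
  intro r hr
  obtain ⟨x, hx⟩ := hi (Or.inl ⟨r, hr, rfl⟩)
  obtain ⟨y, hy⟩ := hi (Or.inr ⟨r, hr, rfl⟩)
  have hyP : y ∈ (P.comap (of G (fun i j h ↦ f i j h) i)).asIdeal.primeCompl := fun h ↦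
    (s r).2 (by simpa [hy] using h)
  refine ⟨IsLocalization.mk' _ x ⟨y, hyP⟩, ?_⟩
  rw [Localization.localRingHom_mk', ← has r]
  congr 1
  exact Subtype.ext hy

/-- A finitely generated ideal of a directed colimit is extended from its contraction to some
stage. -/
lemma exists_le_map_comap_of {I : Ideal (Ring.DirectLimit G fun i j h ↦ f i j h)} (hI : I.FG) :
    ∃ i, I ≤ (I.comap (of G (fun i j h ↦ f i j h) i)).map (of G (fun i j h ↦ f i j h) i) := by
  obtain ⟨s, rfl⟩ := hI
  obtain ⟨i, hi⟩ := exists_subset_range_of s.finite_toSet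
  refine ⟨i, Ideal.span_le.mpr fun x hx ↦ ?_⟩
  obtain ⟨y, rfl⟩ := hi hx
  exact Ideal.mem_map_of_mem _ (Ideal.subset_span hx)

end Ring.DirectLimit

theorem directLimit_almostCM_and_condC (ι : Type u) [Preorder ι] [IsDirected ι (· ≤ ·)]
    [Nonempty ι] (G : ι → Type v) [∀ i, CommRing (G i)] [∀ i, IsNoetherianRing (G i)]
    (f : ∀ i j, i ≤ j → G i →+* G j)
    [DirectedSystem G (fun i j h => ⇑(f i j h))]
    [IsNoetherianRing (Ring.DirectLimit G (fun i j h => f i j h))]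
    (hflat : ∀ (i j : ι) (h : i ≤ j), (f i j h).Flat) :
    ((∀ i, IsAlmostCMRing (G i)) →
      IsAlmostCMRing (Ring.DirectLimit G (fun i j h => f i j h))) ∧
    (∀ n : ℕ, (∀ i, RingCondC (G i) n) →
      RingCondC (Ring.DirectLimit G (fun i j h => f i j h)) n) := by
  have hof := Ring.DirectLimit.flat_of hflat
  refine ⟨fun hCM P _ ↦ (idealDepth_le_depthAt P).antisymm ?_, fun n hC P _ ↦ ?_⟩
  · rw [depthAt_self]
    refine sSup_le ?_
    rintro _ ⟨rs, rfl, hmem, hreg⟩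
    obtain ⟨i, ss, rfl⟩ := Ring.DirectLimit.exists_map_localRingHom_eq P rs
    rw [List.length_map]
    refine ((hof i).length_le_depthAt_comap P ss hmem hreg.toIsWeaklyRegular).trans ?_
    rw [← hCM i _ (mem_support_self _)]
    exact (hof i).idealDepth_le P.isPrime.ne_top le_rfl
  · obtain ⟨i, hi⟩ := Ring.DirectLimit.exists_le_map_comap_of
      (IsNoetherian.noetherian P.asIdeal)
    have hCi := hC i (P.comap (Ring.DirectLimit.of G (fun i j h ↦ f i j h) i)) (mem_support_self _)
    rw [heightAt_self] at hCi ⊢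
    have hht := Ideal.height_le_height_comap_of_le_map _ P.asIdeal hi
    calc min (n : WithBot ℕ∞) P.asIdeal.height
        ≤ _ := min_le_min_left _ (WithBot.coe_le_coe.mpr hht)
      _ ≤ _ := hCi
      _ ≤ _ := by
        gcongr
        exact WithBot.coe_le_coe.mpr ((hof i).depthAt_comap_le P)

end
end
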